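/- Fix n ≥ 4. Let D be the set of squarefree integers m with |m| > 1 such that X^n − m is irreducible over ℚ, the ring of integers 𝓞_m of K_m = ℚ(α) (α a root of X^n − m) is monogenic (there exists θ ∈ 𝓞_m with Algebra.adjoin ℤ {θ} = ⊤), but 𝓞_m ≠ ℤ[α] (i.e., Algebra.adjoin ℤ {α} ≠ ⊤). Then the two-sided natural density of D is 0: lim_{X→∞} #{m ∈ D : |m| ≤ X}/(2X) = 0. -/

import Mathlib

open NumberField Polynomial Filter
open scoped Classical

/-- `m` lies in the exceptional set `D`: `m` is squarefree with `|m| > 1`, `X^n − m` is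
irreducible over `ℚ`, and the pure field `K_m = ℚ(α)` (with `α^n = m`) is monogenic but not
`α`-monogenic, i.e. `𝓞_m = ℤ[θ]` for some `θ` while `𝓞_m ≠ ℤ[α]`. -/
def MemD (n : ℕ) (m : ℤ) : Prop :=
  Squarefree m ∧ 1 < |m| ∧ Irreducible ((X : ℚ[X]) ^ n - C (m : ℚ)) ∧
  ∀ (K : Type) [Field K] [NumberField K] (α : 𝓞 K),
    (α : K) ^ n = (m : K) → Algebra.adjoin ℚ {(α : K)} = ⊤ →
      (∃ θ : 𝓞 K, Algebra.adjoin ℤ {θ} = ⊤) ∧ Algebra.adjoin ℤ {α} ≠ ⊤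

/-!
Suppose `𝓞 K = ℤ[θ]` and `α ^ n = m`, and let `c` be the determinant of `1, α, …, α ^ (n - 1)` in
the basis of powers of `θ`; put `N = n.choose 2`. Since `m` is squarefree, `X ^ n - m` is Eisenstein
at every prime `p ∣ m`, so that `θ ≡ g(α)` modulo `p` for some `g ∈ ℤ[X]`. Expressing the powers of
`θ` through those of `α` then gives `c * g₁ ^ N ≡ 1` modulo `p`, with `g₁` the linear coefficient of
`g`. Hence `c` is prime to `m` and an `N`-th power modulo every prime dividing `m`. Comparing
discriminants, `c ^ 2 ∣ n ^ n`, so only finitely many `c` occur, and `|c| > 1` if `𝓞 K ≠ ℤ[α]`.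

For each such `c` the primes `p` modulo which `c` is not an `N`-th power have divergent `∑ 1 / p`,
so the integers `m` divisible by none of them have density zero. Indeed, if `∑ 1 / p` converged,
almost all primes `p ≡ 1` modulo `N` would split completely in the splitting field `L` of
`X ^ N - c`. Comparing the pole of the Dedekind zeta function of `L` with Dirichlet's theorem,
`[L : ℚ] ≤ φ(N)`, so `L` is cyclotomic, hence abelian, and `c ^ 2` is an `N`-th power. With
`c ^ 2 ∣ n ^ n` this leaves only `n = 4`, `c = ±8`, where `N = 6` is even and the same argument
applies to square roots of `c`, which is not a square.
-/

/-! ### Sets of integers of density zero -/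

section Density

/-- The set `S` has two-sided natural density zero: `#{m ∈ S : |m| ≤ X} / (2 * X) → 0`. -/
def HasDensityZero (S : Set ℤ) : Prop :=
  Tendsto (fun X : ℕ => (((Finset.Icc (-(X : ℤ)) (X : ℤ)).filter (· ∈ S)).card : ℝ) / (2 * X))
    atTop (nhds 0)

theorem HasDensityZero.mono {S T : Set ℤ} (hT : HasDensityZero T) (hST : S ⊆ T) :
    HasDensityZero S := by
  refine squeeze_zero (fun X => by positivity) (fun X => ?_) hT
  gcongr

theorem HasDensityZero.biUnion {ι : Type*} (s : Finset ι) {S : ι → Set ℤ}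
    (hS : ∀ i ∈ s, HasDensityZero (S i)) : HasDensityZero (⋃ i ∈ s, S i) := by
  have hsum := tendsto_finsetSum s hS
  rw [Finset.sum_const_zero] at hsum
  refine squeeze_zero (fun X => by positivity) (fun X => ?_) hsum
  rw [← Finset.sum_div]
  gcongr
  have hsub : (Finset.Icc (-(X : ℤ)) X).filter (· ∈ ⋃ i ∈ s, S i) ⊆
      s.biUnion fun i => (Finset.Icc (-(X : ℤ)) X).filter (· ∈ S i) := fun m hm => by
    simp only [Finset.mem_filter, Set.mem_iUnion, exists_prop, Finset.mem_biUnion] at hm ⊢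
    obtain ⟨hmX, i, hi, hmi⟩ := hm
    exact ⟨i, hi, hmX, hmi⟩
  exact_mod_cast (Finset.card_le_card hsub).trans Finset.card_biUnion_le

theorem card_filter_coprime_le {Q : ℕ} (hQ : Q ≠ 0) (X : ℕ) :
    (((Finset.Icc (-(X : ℤ)) (X : ℤ)).filter fun m => Q.Coprime m.natAbs).card : ℝ) ≤
      2 * ((Q.totient / Q : ℝ) * (X + 1) + Q) := by
  set S := (Finset.Ico 0 (0 + (X + 1))).filter fun k => Q.Coprime k
  have hsub : (Finset.Icc (-(X : ℤ)) X).filter (fun m => Q.Coprime m.natAbs) ⊆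
      S.image (fun k : ℕ => (k : ℤ)) ∪ S.image (fun k : ℕ => -(k : ℤ)) := fun m hm => by
    simp only [Finset.mem_filter, Finset.mem_Icc] at hm
    have hmS : m.natAbs ∈ S :=
      Finset.mem_filter.mpr ⟨Finset.mem_Ico.mpr ⟨Nat.zero_le _, by omega⟩, hm.2⟩
    simp only [Finset.mem_union, Finset.mem_image]
    exact m.natAbs_eq.imp (fun h => ⟨_, hmS, h.symm⟩) fun h => ⟨_, hmS, h.symm⟩
  have hcard : ((Finset.Icc (-(X : ℤ)) X).filter fun m => Q.Coprime m.natAbs).card ≤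
      2 * (Q.totient * ((X + 1) / Q + 1)) := by
    have hpos := Finset.card_image_le (s := S) (f := fun k : ℕ => (k : ℤ))
    have hneg := Finset.card_image_le (s := S) (f := fun k : ℕ => -(k : ℤ))
    have hS : S.card ≤ _ := Nat.Ico_filter_coprime_le 0 (X + 1) hQ
    have := (Finset.card_le_card hsub).trans (Finset.card_union_le _ _)
    omega
  calc _ ≤ ((2 * (Q.totient * ((X + 1) / Q + 1)) : ℕ) : ℝ) := Nat.cast_le.mpr hcard
    _ = 2 * (Q.totient * ((X + 1) / Q : ℕ) + Q.totient) := by push_cast; ring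
    _ ≤ 2 * (Q.totient * ((X + 1) / Q) + Q) := by
        gcongr
        · exact_mod_cast Nat.cast_div_le (α := ℝ) (m := X + 1) (n := Q)
        · exact Nat.totient_le Q
    _ = _ := by ring

theorem hasDensityZero_of_forall_exists_coprime {S : Set ℤ}
    (hS : ∀ ε > (0 : ℝ), ∃ Q : ℕ, Q ≠ 0 ∧ (Q.totient / Q : ℝ) < ε ∧
      ∀ m ∈ S, Q.Coprime m.natAbs) : HasDensityZero S := by
  refine Metric.tendsto_atTop.mpr fun ε hε => ?_
  obtain ⟨Q, hQ, hQε, hSQ⟩ := hS (ε / 4) (by positivity)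
  obtain ⟨X₀, hX₀⟩ := exists_nat_gt (4 * (Q : ℝ) / ε + 1)
  refine ⟨X₀, fun X hX => ?_⟩
  have hXX : 4 * (Q : ℝ) / ε + 1 < X := hX₀.trans_le (by exact_mod_cast hX)
  have hX1 : (1 : ℝ) < X := lt_of_le_of_lt (le_add_of_nonneg_left (by positivity)) hXX
  have hQX : 4 * (Q : ℝ) < ε * X := (div_lt_iff₀' hε).mp (by linarith)
  rw [Real.dist_eq, sub_zero, abs_of_nonneg (by positivity), div_lt_iff₀ (by positivity)]
  calc (((Finset.Icc (-(X : ℤ)) X).filter (· ∈ S)).card : ℝ)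
      ≤ ((Finset.Icc (-(X : ℤ)) X).filter fun m => Q.Coprime m.natAbs).card := by
        gcongr with m
        exact hSQ m
    _ ≤ 2 * ((Q.totient / Q : ℝ) * (X + 1) + Q) := card_filter_coprime_le hQ X
    _ < ε * (2 * X) := by nlinarith

theorem exists_prod_one_sub_lt {ι : Type*} {f : ι → ℝ} (h0 : ∀ i, 0 ≤ f i) (h1 : ∀ i, f i ≤ 1)
    (hf : ¬ Summable f) {ε : ℝ} (hε : 0 < ε) : ∃ s : Finset ι, ∏ i ∈ s, (1 - f i) < ε := by
  obtain ⟨s, hs⟩ : ∃ s : Finset ι, -Real.log ε < ∑ i ∈ s, f i := by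
    by_contra! h
    exact hf (summable_of_sum_le h0 h)
  refine ⟨s, ?_⟩
  calc ∏ i ∈ s, (1 - f i) ≤ ∏ i ∈ s, Real.exp (-f i) :=
        Finset.prod_le_prod (fun i _ => sub_nonneg.mpr (h1 i))
          fun i _ => Real.one_sub_le_exp_neg (f i)
    _ = Real.exp (-∑ i ∈ s, f i) := by rw [← Real.exp_sum, Finset.sum_neg_distrib]
    _ < ε := (Real.lt_log_iff_exp_lt hε).mp (by linarith)

theorem totient_prod_div_prod {s : Finset ℕ} (hs : ∀ p ∈ s, p.Prime) :
    ((∏ p ∈ s, p).totient / (∏ p ∈ s, p : ℕ) : ℝ) = ∏ p ∈ s, (1 - (p : ℝ)⁻¹) := by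
  have hQ : ((∏ p ∈ s, p : ℕ) : ℝ) ≠ 0 :=
    Nat.cast_ne_zero.mpr (Finset.prod_ne_zero_iff.mpr fun p hp => (hs p hp).ne_zero)
  have h := congrArg (Rat.cast (K := ℝ)) (Nat.totient_eq_mul_prod_factors (∏ p ∈ s, p))
  rw [Nat.primeFactors_prod hs] at h
  rw [div_eq_iff hQ, mul_comm]
  push_cast at h ⊢
  exact h

theorem hasDensityZero_of_not_dvd_of_not_summable {B : Set ℕ} (hB : ∀ p ∈ B, p.Prime)
    (hdiv : ¬ Summable (B.indicator fun p : ℕ => (p : ℝ)⁻¹)) :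
    HasDensityZero {m | ∀ p ∈ B, ¬ (p : ℤ) ∣ m} := by
  refine hasDensityZero_of_forall_exists_coprime fun ε hε => ?_
  obtain ⟨s, hs⟩ := exists_prod_one_sub_lt (f := fun p : B => (p : ℝ)⁻¹) (fun _ => by positivity)
    (fun p => inv_le_one_of_one_le₀ (by exact_mod_cast (hB p p.2).one_le))
    (fun h => hdiv (summable_subtype_iff_indicator.mp h)) hε
  have hsB : ∀ p ∈ s.map (Function.Embedding.subtype (· ∈ B)), p ∈ B := fun p hp => by
    obtain ⟨q, -, rfl⟩ := Finset.mem_map.mp hp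
    exact q.2
  have hprime := fun p hp => hB p (hsB p hp)
  refine ⟨∏ p ∈ s.map (Function.Embedding.subtype (· ∈ B)), p,
    Finset.prod_ne_zero_iff.mpr fun p hp => (hprime p hp).ne_zero, ?_, fun m hm => ?_⟩
  · rw [totient_prod_div_prod hprime, Finset.prod_map]
    exact hs
  · refine Nat.coprime_prod_left_iff.mpr fun p hp => ?_
    rw [(hprime p hp).coprime_iff_not_dvd, ← Int.natCast_dvd]
    exact hm p (hsB p hp)

end Density

/-! ### Euler products near the pole of the Dedekind zeta function -/

section EulerProduct

theorem injOn_prod_of_prime {α : Type*} [CommMonoidWithZero α] [UniqueFactorizationMonoid α]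
    [Subsingleton αˣ] {S : Finset α} (hS : ∀ p ∈ S, Prime p) :
    Set.InjOn (fun t : Finset α => ∏ p ∈ t, p) S.powerset := by
  have hfactors : ∀ t ∈ S.powerset,
      UniqueFactorizationMonoid.normalizedFactors (∏ p ∈ t, p) = t.val := fun t ht => by
    rw [Finset.prod_eq_multiset_prod, Multiset.map_id']
    exact UniqueFactorizationMonoid.normalizedFactors_prod_of_prime
      fun p hp => hS p (Finset.mem_powerset.mp ht hp)
  intro t ht u hu htu
  rw [← Finset.val_inj, ← hfactors t ht, ← hfactors u hu]
  exact congrArg _ htu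

theorem exp_sub_sq_le_one_add {x : ℝ} (hx : 0 ≤ x) : Real.exp (x - x ^ 2) ≤ 1 + x := by
  rw [← neg_sub (x ^ 2), Real.exp_neg]
  refine inv_le_of_inv_le₀ (by positivity) ((?_ : (1 + x)⁻¹ ≤ x ^ 2 - x + 1).trans
    (Real.add_one_le_exp _))
  rw [inv_le_iff_one_le_mul₀ (by positivity)]
  nlinarith [pow_nonneg hx 3]

variable (K : Type*) [Field K] [NumberField K]

theorem dedekindZeta_ofReal {s : ℝ} (hs : s ≠ 0) :
    dedekindZeta K s =
      ((∑' n : ℕ, Nat.card {I : Ideal (𝓞 K) // I.absNorm = n} * (n : ℝ) ^ (-s) : ℝ) : ℂ) := by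
  rw [dedekindZeta, LSeries, Complex.ofReal_tsum]
  refine tsum_congr fun n => ?_
  rcases eq_or_ne n 0 with rfl | hn
  · simp [Real.zero_rpow (neg_ne_zero.mpr hs)]
  · rw [LSeries.term_of_ne_zero hn, Complex.ofReal_mul, Complex.ofReal_cpow (Nat.cast_nonneg n),
      Complex.ofReal_neg, Complex.cpow_neg, div_eq_mul_inv]
    simp

theorem sum_absNorm_rpow_le_tsum {s : ℝ}
    (hs : Summable fun n : ℕ => Nat.card {I : Ideal (𝓞 K) // I.absNorm = n} * (n : ℝ) ^ (-s))
    (T : Finset (Ideal (𝓞 K))) :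
    ∑ I ∈ T, (I.absNorm : ℝ) ^ (-s) ≤
      ∑' n : ℕ, Nat.card {I : Ideal (𝓞 K) // I.absNorm = n} * (n : ℝ) ^ (-s) := by
  rw [Finset.sum_comp (fun n : ℕ => (n : ℝ) ^ (-s)) Ideal.absNorm]
  refine (Finset.sum_le_sum fun n _ => ?_).trans (hs.sum_le_tsum _ fun n _ => by positivity)
  have : Finite {I : Ideal (𝓞 K) // I.absNorm = n} := Ideal.finite_setOfPred_absNorm_eq n
  rw [nsmul_eq_mul]
  gcongr
  rw [← Nat.card_eq_finsetCard]
  exact Finite.card_le_of_embedding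
    (Subtype.impEmbedding _ _ fun I hI => (Finset.mem_filter.mp hI).2)

/-- The bound reflects the simple pole of `dedekindZeta K` at `1`. -/
theorem exists_eventually_sum_absNorm_rpow_le :
    ∃ R > 0, ∀ᶠ s : ℝ in nhdsWithin 1 (Set.Ioi 1), ∀ T : Finset (Ideal (𝓞 K)),
      ∑ I ∈ T, (I.absNorm : ℝ) ^ (-s) ≤ R / (s - 1) := by
  have hpos := dedekindZeta_residue_pos K
  set ρ := dedekindZeta_residue K
  refine ⟨2 * ρ, by positivity, ?_⟩
  filter_upwards [(tendsto_sub_one_mul_dedekindZeta_nhdsGT K).eventually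
    (Metric.ball_mem_nhds (ρ : ℂ) hpos), self_mem_nhdsWithin] with s hs hs1 T
  have hs1 : 1 < s := hs1
  rw [Complex.dist_eq, dedekindZeta_ofReal K (by linarith), ← Complex.ofReal_one,
    ← Complex.ofReal_sub, ← Complex.ofReal_mul, ← Complex.ofReal_sub, Complex.norm_real,
    Real.norm_eq_abs, abs_lt] at hs
  have hsum : Summable fun n : ℕ =>
      Nat.card {I : Ideal (𝓞 K) // I.absNorm = n} * (n : ℝ) ^ (-s) := by
    by_contra h
    rw [tsum_eq_zero_of_not_summable h] at hs
    linarith [hs.1]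
  rw [le_div_iff₀' (by linarith)]
  have := mul_le_mul_of_nonneg_left (sum_absNorm_rpow_le_tsum K hsum T) (sub_nonneg.mpr hs1.le)
  linarith [hs.2]

theorem exists_eventually_prod_one_add_absNorm_rpow_le :
    ∃ R > 0, ∀ᶠ s : ℝ in nhdsWithin 1 (Set.Ioi 1), ∀ S : Finset (Ideal (𝓞 K)),
      (∀ P ∈ S, Prime P) → ∏ P ∈ S, (1 + (P.absNorm : ℝ) ^ (-s)) ≤ R / (s - 1) := by
  obtain ⟨R, hR, hbound⟩ := exists_eventually_sum_absNorm_rpow_le K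
  refine ⟨R, hR, ?_⟩
  filter_upwards [hbound] with s hs S hS
  calc ∏ P ∈ S, (1 + (P.absNorm : ℝ) ^ (-s))
      = ∑ t ∈ S.powerset, ((∏ P ∈ t, P).absNorm : ℝ) ^ (-s) := by
        rw [Finset.prod_one_add]
        refine Finset.sum_congr rfl fun t _ => ?_
        rw [map_prod, Nat.cast_prod, Real.finsetProd_rpow _ _ fun P _ => Nat.cast_nonneg _]
    _ = ∑ I ∈ S.powerset.image fun t => ∏ P ∈ t, P, (I.absNorm : ℝ) ^ (-s) :=
        (Finset.sum_image (f := fun I : Ideal (𝓞 K) => (I.absNorm : ℝ) ^ (-s))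
          (injOn_prod_of_prime hS)).symm
    _ ≤ R / (s - 1) := hs _

end EulerProduct

/-! ### Primes congruent to one -/

section PrimesOneMod

/-- The primes congruent to `1` modulo `h`. -/
def primesOneMod (h : ℕ) : Set ℕ := {p | p.Prime ∧ (p : ZMod h) = 1}

theorem dvd_sub_one_of_mem_primesOneMod {h p : ℕ} (hp : p ∈ primesOneMod h) : h ∣ p - 1 := by
  rw [← ZMod.natCast_eq_zero_iff, Nat.cast_sub hp.1.one_le, hp.2, Nat.cast_one, sub_self]

theorem summable_indicator_rpow (A : Set ℕ) {s : ℝ} (hs : 1 < s) :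
    Summable (A.indicator fun n : ℕ => (n : ℝ) ^ (-s)) :=
  (Real.summable_nat_rpow.mpr (by linarith)).indicator A

theorem mul_log_mul_rpow_neg_le_sub {x s t : ℝ} (hx : 0 < x) :
    (s - t) * (Real.log x * x ^ (-s)) ≤ x ^ (-t) - x ^ (-s) := by
  have hxt : x ^ (-t) = x ^ (-s) * Real.exp ((s - t) * Real.log x) := by
    rw [mul_comm (s - t), ← Real.rpow_def_of_pos hx, ← Real.rpow_add hx]
    congr 1
    ring
  have hexp := Real.add_one_le_exp ((s - t) * Real.log x)
  have hpos : 0 < x ^ (-s) := Real.rpow_pos_of_pos hx _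
  rw [hxt]
  nlinarith

theorem mul_indicator_log_mul_rpow_le_sub (A : Set ℕ) {s t : ℝ} (hs : s ≠ 0) (ht : t ≠ 0) (n : ℕ) :
    (s - t) * A.indicator (fun n : ℕ => Real.log n * (n : ℝ) ^ (-s)) n ≤
      A.indicator (fun n : ℕ => (n : ℝ) ^ (-t)) n -
        A.indicator (fun n : ℕ => (n : ℝ) ^ (-s)) n := by
  by_cases hn : n ∈ A
  · simp only [Set.indicator_of_mem hn]
    rcases n.eq_zero_or_pos with rfl | hpos
    · simp [hs, ht]
    · exact mul_log_mul_rpow_neg_le_sub (Nat.cast_pos.mpr hpos)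
  · simp [Set.indicator_of_notMem hn]

theorem summable_indicator_log_mul_rpow (A : Set ℕ) {s : ℝ} (hs : 1 < s) :
    Summable (A.indicator fun n : ℕ => Real.log n * (n : ℝ) ^ (-s)) := by
  obtain ⟨t, ht1, hts⟩ := exists_between hs
  refine (summable_mul_left_iff (sub_pos.mpr hts).ne').mp (Summable.of_nonneg_of_le
    (fun n => mul_nonneg (sub_pos.mpr hts).le (Set.indicator_nonneg (fun n _ => ?_) n))
    (mul_indicator_log_mul_rpow_le_sub A (by linarith) (by linarith))
    ((summable_indicator_rpow A ht1).sub (summable_indicator_rpow A hs)))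
  positivity

theorem mul_tsum_log_mul_rpow_le_sub (A : Set ℕ) {s t : ℝ} (hs : 1 < s) (ht : 1 < t) :
    (s - t) * ∑' n, A.indicator (fun n : ℕ => Real.log n * (n : ℝ) ^ (-s)) n ≤
      ∑' n, A.indicator (fun n : ℕ => (n : ℝ) ^ (-t)) n -
        ∑' n, A.indicator (fun n : ℕ => (n : ℝ) ^ (-s)) n := by
  have hst := summable_indicator_rpow A ht
  rw [← tsum_mul_left, ← hst.tsum_sub (summable_indicator_rpow A hs)]
  exact Summable.tsum_le_tsum
    (mul_indicator_log_mul_rpow_le_sub A (by linarith) (by linarith))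
    ((summable_indicator_log_mul_rpow A hs).mul_left _) (hst.sub (summable_indicator_rpow A hs))

open ArithmeticFunction.vonMangoldt

theorem residueClass_one_div_rpow_le (h : ℕ) {x : ℝ} (hx : 1 < x) (n : ℕ) :
    residueClass (1 : ZMod h) n / (n : ℝ) ^ x ≤
      (primesOneMod h).indicator (fun p : ℕ => Real.log p * (p : ℝ) ^ (-x)) n +
        (if n.Prime then 0 else residueClass (1 : ZMod h) n) / n := by
  have hind : 0 ≤ (primesOneMod h).indicator (fun p : ℕ => Real.log p * (p : ℝ) ^ (-x)) n :=
    Set.indicator_nonneg (fun p _ => by positivity) n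
  by_cases hn : n.Prime
  · rw [if_pos hn, zero_div, add_zero]
    by_cases hn1 : (n : ZMod h) = 1
    · rw [Set.indicator_of_mem (show n ∈ primesOneMod h from ⟨hn, hn1⟩), residueClass,
        Set.indicator_of_mem (by exact hn1), ArithmeticFunction.vonMangoldt_apply_prime hn,
        Real.rpow_neg (Nat.cast_nonneg n), div_eq_mul_inv]
    · rwa [residueClass, Set.indicator_of_notMem (by exact hn1), zero_div]
  · rw [if_neg hn]
    refine le_add_of_nonneg_of_le hind ?_
    rcases n.eq_zero_or_pos with rfl | hpos
    · simp
    · refine div_le_div_of_nonneg_left (residueClass_nonneg _ n) (Nat.cast_pos.mpr hpos) ?_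
      exact Real.self_le_rpow_of_one_le (by exact_mod_cast hpos) hx.le

theorem exists_le_tsum_log_primesOneMod (h : ℕ) [NeZero h] :
    ∃ C : ℝ, ∀ x ∈ Set.Ioc (1 : ℝ) 2, (h.totient : ℝ)⁻¹ / (x - 1) - C ≤
      ∑' p, (primesOneMod h).indicator (fun p : ℕ => Real.log p * (p : ℝ) ^ (-x)) p := by
  obtain ⟨C, hC⟩ := LSeries_residueClass_lower_bound (q := h) (a := 1) isUnit_one
  have hv := summable_residueClass_non_primes_div (1 : ZMod h)
  refine ⟨C + ∑' n : ℕ, (if n.Prime then 0 else residueClass (1 : ZMod h) n) / n, fun x hx => ?_⟩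
  have hsum := (summable_indicator_log_mul_rpow (primesOneMod h) hx.1).add hv
  have hle := residueClass_one_div_rpow_le h hx.1
  have htsum := Summable.tsum_le_tsum hle (hsum.of_nonneg_of_le
    (fun n => div_nonneg (residueClass_nonneg _ n) (by positivity)) hle) hsum
  rw [(summable_indicator_log_mul_rpow (primesOneMod h) hx.1).tsum_add hv] at htsum
  have hlower : _ ≤ ∑' n : ℕ, residueClass (1 : ZMod h) n / (n : ℝ) ^ x := hC hx
  linarith

/-- A discrete form of `∑ p⁻ˢ ≥ log (1 / (s - 1)) / φ(h) - O(1)`, with slope tending to the right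
value as `r → 1`. -/
theorem exists_le_tsum_primesOneMod (h : ℕ) [NeZero h] :
    ∃ C : ℝ, ∀ r ∈ Set.Ioo (0 : ℝ) 1, ∀ k : ℕ, (1 - r) / h.totient * k - C ≤
      ∑' p, (primesOneMod h).indicator (fun p : ℕ => (p : ℝ) ^ (-(1 + r ^ k))) p := by
  obtain ⟨C, hC⟩ := exists_le_tsum_log_primesOneMod h
  refine ⟨|C|, fun r ⟨hr0, hr1⟩ k => ?_⟩
  set G : ℝ → ℝ := fun s => ∑' p, (primesOneMod h).indicator (fun p : ℕ => (p : ℝ) ^ (-s)) p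
  have hstep : ∀ k : ℕ, (1 - r) / h.totient - |C| * (r ^ k - r ^ (k + 1)) ≤
      G (1 + r ^ (k + 1)) - G (1 + r ^ k) := fun k => by
    have hpos : 0 < r ^ k := by positivity
    have hle : r ^ k ≤ 1 := pow_le_one₀ hr0.le hr1.le
    have hlt : r ^ (k + 1) < r ^ k := pow_lt_pow_right_of_lt_one₀ hr0 hr1 k.lt_succ_self
    calc (1 - r) / h.totient - |C| * (r ^ k - r ^ (k + 1))
        ≤ (1 - r) / h.totient - C * (r ^ k - r ^ (k + 1)) := by
          gcongr
          exact le_abs_self C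
      _ = (1 + r ^ k - (1 + r ^ (k + 1))) * ((h.totient : ℝ)⁻¹ / (1 + r ^ k - 1) - C) := by
          rw [add_sub_cancel_left]
          field_simp
          ring
      _ ≤ _ := (mul_le_mul_of_nonneg_left (hC _ ⟨by linarith, by linarith⟩) (by linarith)).trans
          (mul_tsum_log_mul_rpow_le_sub _ (by linarith) (lt_add_of_pos_right 1 (by positivity)))
  have htelescope : (1 - r) / h.totient * k - |C| * (1 - r ^ k) ≤ G (1 + r ^ k) := by
    induction k with
    | zero => simpa using tsum_nonneg fun p => Set.indicator_nonneg (fun p _ => by positivity) p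
    | succ k ih =>
      push_cast
      linarith [hstep k]
  exact le_trans (by nlinarith [abs_nonneg C, pow_pos hr0 k]) htelescope

end PrimesOneMod

/-! ### Completely split primes -/

section SplitsCompletely

/-- The prime number `p` splits completely in `K`: there are `[K : ℚ]` prime ideals of `𝓞 K` of
norm `p`. -/
def SplitsCompletely (K : Type*) [Field K] [NumberField K] (p : ℕ) : Prop :=
  ∃ F : Finset (Ideal (𝓞 K)), F.card = Module.finrank ℚ K ∧
    ∀ P ∈ F, P.IsPrime ∧ P.absNorm = p

variable (K : Type*) [Field K] [NumberField K]

theorem exp_card_mul_le_prod_one_add_absNorm_rpow {F : Finset (Ideal (𝓞 K))} {p : ℕ} (hp : p ≠ 0)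
    (hF : ∀ P ∈ F, P.absNorm = p) {s : ℝ} (hs : 1 ≤ s) :
    Real.exp (F.card * ((p : ℝ) ^ (-s) - (p : ℝ) ^ (-2 : ℝ))) ≤
      ∏ P ∈ F, (1 + (P.absNorm : ℝ) ^ (-s)) := by
  have hp1 : (1 : ℝ) ≤ p := Nat.one_le_cast.mpr (Nat.pos_of_ne_zero hp)
  have hsq : ((p : ℝ) ^ (-s)) ^ 2 ≤ (p : ℝ) ^ (-2 : ℝ) := by
    rw [← Real.rpow_natCast, ← Real.rpow_mul (by positivity)]
    exact Real.rpow_le_rpow_of_exponent_le hp1 (by push_cast; linarith)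
  rw [Finset.prod_congr rfl fun P hP => by rw [hF P hP], Finset.prod_const, Real.exp_nat_mul]
  gcongr
  exact (Real.exp_le_exp.mpr (by linarith)).trans (exp_sub_sq_le_one_add (by positivity))

theorem exists_eventually_exp_sum_splitsCompletely_le :
    ∃ R > 0, ∀ᶠ s : ℝ in nhdsWithin 1 (Set.Ioi 1), ∀ T : Finset ℕ,
      (∀ p ∈ T, p.Prime ∧ SplitsCompletely K p) →
        Real.exp (Module.finrank ℚ K * ∑ p ∈ T, ((p : ℝ) ^ (-s) - (p : ℝ) ^ (-2 : ℝ))) ≤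
          R / (s - 1) := by
  obtain ⟨R, hRpos, hR⟩ := exists_eventually_prod_one_add_absNorm_rpow_le K
  refine ⟨R, hRpos, ?_⟩
  filter_upwards [hR, self_mem_nhdsWithin] with s hs hs1 T hT
  choose! F hcard hF using fun p hp => (hT p hp).2
  have hdisj : (T : Set ℕ).PairwiseDisjoint F := fun p hp q hq hpq =>
    Finset.disjoint_left.mpr fun P hP hQ =>
      hpq ((hF p hp P hP).2.symm.trans (hF q hq P hQ).2)
  calc Real.exp (Module.finrank ℚ K * ∑ p ∈ T, ((p : ℝ) ^ (-s) - (p : ℝ) ^ (-2 : ℝ)))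
      = ∏ p ∈ T, Real.exp (Module.finrank ℚ K * ((p : ℝ) ^ (-s) - (p : ℝ) ^ (-2 : ℝ))) := by
        rw [Finset.mul_sum, Real.exp_sum]
    _ ≤ ∏ p ∈ T, ∏ P ∈ F p, (1 + (P.absNorm : ℝ) ^ (-s)) := by
        refine Finset.prod_le_prod (fun p _ => (Real.exp_pos _).le) fun p hp => ?_
        rw [← hcard p hp]
        exact exp_card_mul_le_prod_one_add_absNorm_rpow K (hT p hp).1.ne_zero
          (fun P hP => (hF p hp P hP).2) (Set.mem_Ioi.mp hs1).le
    _ = ∏ P ∈ T.biUnion F, (1 + (P.absNorm : ℝ) ^ (-s)) := (Finset.prod_biUnion hdisj).symm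
    _ ≤ R / (s - 1) := by
        refine hs _ fun P hP => ?_
        obtain ⟨p, hp, hPp⟩ := Finset.mem_biUnion.mp hP
        refine Ideal.prime_of_isPrime ?_ (hF p hp P hPp).1
        rintro rfl
        exact (hT p hp).1.ne_zero ((hF p hp ⊥ hPp).2.symm.trans Ideal.absNorm_bot)

theorem exists_eventually_tsum_splitsCompletely_le :
    ∃ C : ℝ, ∀ᶠ s : ℝ in nhdsWithin 1 (Set.Ioi 1), ∀ A : Set ℕ,
      (∀ p ∈ A, p.Prime ∧ SplitsCompletely K p) →
        Module.finrank ℚ K * ∑' p, A.indicator (fun p : ℕ => (p : ℝ) ^ (-s)) p ≤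
          C - Real.log (s - 1) := by
  obtain ⟨R, hRpos, hR⟩ := exists_eventually_exp_sum_splitsCompletely_le K
  have hsq : Summable fun p : ℕ => (p : ℝ) ^ (-2 : ℝ) := Real.summable_nat_rpow.mpr (by norm_num)
  refine ⟨Real.log R + Module.finrank ℚ K * ∑' p : ℕ, (p : ℝ) ^ (-2 : ℝ), ?_⟩
  filter_upwards [hR, self_mem_nhdsWithin] with s hs hs1 A hA
  have hs1 : 1 < s := hs1
  rw [← tsum_mul_left]
  refine ((summable_indicator_rpow A hs1).mul_left _).tsum_le_of_sum_le fun T => ?_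
  rw [← Finset.mul_sum, Finset.sum_indicator_eq_sum_filter]
  have hexp := hs (T.filter (· ∈ A)) fun p hp => hA p (Finset.mem_filter.mp hp).2
  rw [← Real.le_log_iff_exp_le (by have := sub_pos.mpr hs1; positivity),
    Real.log_div hRpos.ne' (sub_pos.mpr hs1).ne', Finset.sum_sub_distrib, mul_sub] at hexp
  have hle : Module.finrank ℚ K * ∑ p ∈ T.filter (· ∈ A), (p : ℝ) ^ (-2 : ℝ) ≤
      Module.finrank ℚ K * ∑' p : ℕ, (p : ℝ) ^ (-2 : ℝ) := by
    gcongr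
    exact hsq.sum_le_tsum _ fun p _ => by positivity
  linarith

theorem tsum_indicator_rpow_le_add {A S : Set ℕ} (hA : 0 ∉ A)
    (hsum : Summable ((A \ S).indicator fun n : ℕ => (n : ℝ)⁻¹)) {s : ℝ} (hs : 1 < s) :
    ∑' n, A.indicator (fun n : ℕ => (n : ℝ) ^ (-s)) n ≤
      ∑' n, (A ∩ S).indicator (fun n : ℕ => (n : ℝ) ^ (-s)) n +
        ∑' n, (A \ S).indicator (fun n : ℕ => (n : ℝ)⁻¹) n := by
  have hS := summable_indicator_rpow (A ∩ S) hs
  rw [← hS.tsum_add hsum]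
  refine Summable.tsum_le_tsum (fun n => ?_) (summable_indicator_rpow A hs) (hS.add hsum)
  rw [← Set.inter_union_sdiff A S, Set.indicator_union_of_disjoint Set.disjoint_sdiff_inter.symm,
    Set.inter_union_sdiff]
  refine add_le_add_right (Set.indicator_le_indicator' fun hn => ?_) _
  rw [← Real.rpow_neg_one]
  have hn0 : n ≠ 0 := fun h => hA (h ▸ hn.1)
  exact Real.rpow_le_rpow_of_exponent_le (Nat.one_le_cast.mpr (Nat.pos_of_ne_zero hn0))
    (by linarith)

theorem nonpos_of_eventually_mul_natCast_le {a C : ℝ} (h : ∀ᶠ k : ℕ in atTop, a * k ≤ C) :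
    a ≤ 0 := by
  by_contra! ha
  obtain ⟨k, hle, hlt⟩ := (h.and ((tendsto_natCast_atTop_atTop.const_mul_atTop ha).eventually
    (eventually_gt_atTop C))).exists
  exact hlt.not_ge hle

theorem finrank_mul_le_neg_log_of_summable {h : ℕ} [NeZero h]
    (hsum : Summable ((primesOneMod h \ {p | SplitsCompletely K p}).indicator
      fun p : ℕ => (p : ℝ)⁻¹)) {r : ℝ} (hr : r ∈ Set.Ioo 0 1) :
    Module.finrank ℚ K * ((1 - r) / h.totient) ≤ -Real.log r := by
  obtain ⟨C₁, hC₁⟩ := exists_le_tsum_primesOneMod h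
  obtain ⟨C₂, hC₂⟩ := exists_eventually_tsum_splitsCompletely_le K
  set d : ℝ := (Module.finrank ℚ K : ℝ)
  set C₃ := ∑' p, (primesOneMod h \ {p | SplitsCompletely K p}).indicator (fun p : ℕ => (p : ℝ)⁻¹) p
  have hpos : ∀ k : ℕ, 1 < 1 + r ^ k := fun k => lt_add_of_pos_right 1 (pow_pos hr.1 k)
  have hlim : Tendsto (fun k : ℕ => 1 + r ^ k) atTop (nhdsWithin 1 (Set.Ioi 1)) := by
    refine tendsto_nhdsWithin_iff.mpr ⟨?_, Eventually.of_forall hpos⟩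
    simpa using (tendsto_pow_atTop_nhds_zero_of_lt_one hr.1.le hr.2).const_add 1
  suffices d * ((1 - r) / h.totient) + Real.log r ≤ 0 by linarith
  refine nonpos_of_eventually_mul_natCast_le (C := C₂ + d * C₃ + d * C₁) ?_
  filter_upwards [hlim.eventually hC₂] with k hk
  have hsplit := hk (primesOneMod h ∩ {p | SplitsCompletely K p}) fun p hp => ⟨hp.1.1, hp.2⟩
  rw [add_sub_cancel_left, Real.log_pow] at hsplit
  have hall := mul_le_mul_of_nonneg_left ((hC₁ r hr k).trans
    (tsum_indicator_rpow_le_add (fun h0 => Nat.not_prime_zero h0.1) hsum (hpos k)))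
    (Nat.cast_nonneg (α := ℝ) (Module.finrank ℚ K))
  linarith

theorem finrank_le_totient_of_summable {h : ℕ} [NeZero h]
    (hsum : Summable ((primesOneMod h \ {p | SplitsCompletely K p}).indicator
      fun p : ℕ => (p : ℝ)⁻¹)) :
    Module.finrank ℚ K ≤ h.totient := by
  have hφ : (0 : ℝ) < h.totient := Nat.cast_pos.mpr (Nat.totient_pos.mpr (NeZero.pos h))
  have hmul : ∀ r ∈ Set.Ioo (0 : ℝ) 1, Module.finrank ℚ K * r ≤ h.totient := fun r hr => by
    have hlog : -Real.log r ≤ (1 - r) / r := by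
      have := Real.one_sub_inv_le_log_of_pos hr.1
      rw [sub_div, div_self hr.1.ne', one_div]
      linarith
    have hle := (finrank_mul_le_neg_log_of_summable K hsum hr).trans hlog
    rw [mul_div_left_comm, div_eq_mul_inv (1 - r),
      mul_le_mul_iff_of_pos_left (sub_pos.mpr hr.2), ← one_div, div_le_div_iff₀ hφ hr.1] at hle
    linarith
  have hlim : Tendsto (fun r : ℝ => Module.finrank ℚ K * r) (nhdsWithin 1 (Set.Iio 1))
      (nhds (Module.finrank ℚ K * 1)) :=
    ((continuous_const_mul _).tendsto 1).mono_left nhdsWithin_le_nhds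
  have := le_of_tendsto hlim (by
    filter_upwards [Ioo_mem_nhdsLT zero_lt_one] with r hr using hmul r hr)
  rw [mul_one] at this
  exact_mod_cast this

end SplitsCompletely

/-! ### Kummer extensions -/

section Kummer

open scoped Pointwise

theorem splitsCompletely_of_stabilizer_eq_bot {K : Type*} [Field K] [NumberField K] [IsGalois ℚ K]
    {p : ℕ} (hp : p.Prime) {P : Ideal (𝓞 K)} [P.IsPrime] [P.LiesOver (Ideal.span {(p : ℤ)})]
    (hP : MulAction.stabilizer Gal(K/ℚ) P = ⊥) : SplitsCompletely K p := by
  set pI : Ideal ℤ := Ideal.span {(p : ℤ)}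
  have hpI : Prime (p : ℤ) := Nat.prime_iff_prime_int.mp hp
  have : pI.IsPrime := (Ideal.span_singleton_prime hpI.ne_zero).mpr hpI
  have : pI.IsMaximal :=
    Ideal.IsPrime.isMaximal inferInstance (mt Ideal.span_singleton_eq_bot.mp hpI.ne_zero)
  have : NeZero p := ⟨hp.ne_zero⟩
  have hef := Ideal.card_stabilizer_eq (G := Gal(K/ℚ)) pI P
  rw [hP, Subgroup.card_bot] at hef
  have hinj : Function.Injective fun σ : Gal(K/ℚ) => σ • P := fun σ τ hστ => by
    have hmem : τ⁻¹ * σ ∈ MulAction.stabilizer Gal(K/ℚ) P := by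
      rw [MulAction.mem_stabilizer_iff, mul_smul, inv_smul_eq_iff]
      exact hστ
    rw [hP, Subgroup.mem_bot] at hmem
    exact (inv_mul_eq_one.mp hmem).symm
  refine ⟨Finset.univ.image fun σ : Gal(K/ℚ) => σ • P, ?_, fun Q hQ => ?_⟩
  · rw [Finset.card_image_of_injective _ hinj, Finset.card_univ, ← Nat.card_eq_fintype_card,
      IsGalois.card_aut_eq_finrank]
  · obtain ⟨σ, -, rfl⟩ := Finset.mem_image.mp hQ
    have hprime : (σ • P).IsPrime := inferInstance
    have : (σ • P).IsMaximal := Ideal.IsMaximal.of_liesOver_isMaximal (σ • P) pI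
    refine ⟨hprime, ?_⟩
    rw [Ideal.absNorm_eq_pow_inertiaDeg' (σ • P) hp, Ideal.inertiaDeg'_eq_inertiaDeg,
      ← Ideal.inertiaDegIn_eq_inertiaDeg pI (σ • P) Gal(K/ℚ),
      Nat.eq_one_of_mul_eq_one_left hef.symm, pow_one]

theorem exists_intCast_eq_of_pow_eq {Q : Type*} [CommRing Q] [IsDomain Q] {h p : ℕ} [CharP Q p]
    (hp : p ∈ primesOneMod h) {a : ℤ} {y : ZMod p} (hy : y ^ h = a) {β : Q} (hβ : β ^ h = a) :
    ∃ r : ℤ, (r : Q) = β := by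
  have : Fact p.Prime := ⟨hp.1⟩
  have : NeZero (p - 1) := ⟨Nat.sub_ne_zero_of_lt hp.1.one_lt⟩
  have hdvd := dvd_sub_one_of_mem_primesOneMod hp
  have : NeZero h := ⟨ne_zero_of_dvd_ne_zero (NeZero.ne _) hdvd⟩
  have := HasEnoughRootsOfUnity.of_dvd (ZMod p) hdvd
  obtain ⟨ζ, hζ⟩ := HasEnoughRootsOfUnity.exists_primitiveRoot (ZMod p) h
  let φ : ZMod p →+* Q := ZMod.castHom dvd_rfl Q
  have hmem : β ∈ nthRoots h (a : Q) := (mem_nthRoots (NeZero.pos h)).mpr hβ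
  rw [(hζ.map_of_injective φ.injective).nthRoots_eq
    (show φ y ^ h = a by rw [← map_pow, hy, map_intCast])] at hmem
  obtain ⟨i, -, rfl⟩ := Multiset.mem_map.mp hmem
  obtain ⟨r, hr⟩ := ZMod.intCast_surjective (ζ ^ i * y)
  exact ⟨r, by rw [← map_intCast φ, hr, map_mul, map_pow]⟩

theorem eq_of_pow_eq_of_sub_mem {R : Type*} [CommRing R] [IsDomain R] {h : ℕ} {a β γ : R}
    (hβ : β ^ h = a) (hγ : γ ^ h = a) {P : Ideal R} [hP : P.IsPrime] (hh : (h : R) ∉ P)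
    (ha : a ∉ P) (hsub : β - γ ∈ P) : β = γ := by
  by_contra hne
  have hsum : ∑ i ∈ Finset.range h, β ^ i * γ ^ (h - 1 - i) = 0 :=
    (mul_eq_zero.mp ((Commute.all β γ).geom_sum₂_mul h ▸ by rw [hβ, hγ, sub_self])).resolve_right
      (sub_ne_zero.mpr hne)
  have hγP : (h : R) * γ ^ (h - 1) ∈ P := by
    have := congrArg (Ideal.Quotient.mk P) hsum
    rw [RingHom.map_geom_sum₂, Ideal.Quotient.eq.mpr hsub, geom_sum₂_self, ← map_pow,
      ← map_natCast (Ideal.Quotient.mk P), ← map_mul, map_zero] at this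
    exact Ideal.Quotient.eq_zero_iff_mem.mp this
  have hh0 : h ≠ 0 := fun h0 => hh (by rw [h0, Nat.cast_zero]; exact P.zero_mem)
  exact ha (hγ ▸ P.pow_mem_of_mem
    (hP.mem_of_pow_mem _ ((hP.mem_or_mem hγP).resolve_left hh)) h (Nat.pos_of_ne_zero hh0))

theorem smul_sub_self_mem_of_sub_intCast_mem {G R : Type*} [Group G] [CommRing R]
    [MulSemiringAction G R] {P : Ideal R} {σ : G} (hσ : σ • P = P) {b : R} {r : ℤ}
    (hb : b - r ∈ P) : σ • b - b ∈ P := by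
  have hr : σ • (r : R) = r := map_intCast (MulSemiringAction.toRingHom G R σ) r
  have hσb := Ideal.smul_mem_pointwise_smul σ _ _ hb
  rw [hσ, smul_sub, hr] at hσb
  simpa using P.sub_mem hσb hb

theorem intCast_mem_iff_dvd {R : Type*} [CommRing R] {P : Ideal R} {p : ℕ}
    [hP : P.LiesOver (Ideal.span {(p : ℤ)})]
    (z : ℤ) : (z : R) ∈ P ↔ (p : ℤ) ∣ z := by
  rw [← Ideal.mem_span_singleton, hP.over, Ideal.mem_comap]
  simp

section

variable {K : Type*} [Field K] [NumberField K] {h : ℕ} {a : ℤ}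

theorem algEquiv_eq_one_of_smul_eq (hh : h ≠ 0)
    (hK : IsSplittingField ℚ K (X ^ h - C (a : ℚ))) {σ : Gal(K/ℚ)}
    (hσ : ∀ b : 𝓞 K, b ^ h = a → σ • b = b) : σ = 1 := by
  suffices (σ : K →ₐ[ℚ] K) = AlgHom.id ℚ K from
    AlgEquiv.ext fun x => DFunLike.congr_fun this x
  refine AlgHom.ext_of_adjoin_eq_top hK.adjoin_rootSet' fun β hβ => ?_
  have hβa : β ^ h = a := by simpa [sub_eq_zero] using (mem_rootSet.mp hβ).2
  have hintegral : IsIntegral ℤ β :=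
    IsIntegral.of_pow (Nat.pos_of_ne_zero hh) (hβa ▸ isIntegral_algebraMap (x := a))
  obtain ⟨b, rfl⟩ := (IsIntegralClosure.isIntegral_iff (A := 𝓞 K)).mp hintegral
  exact congrArg (algebraMap (𝓞 K) K)
    (hσ b (FaithfulSMul.algebraMap_injective (𝓞 K) K (by rw [map_pow, map_intCast, hβa])))

/-- An element of the decomposition group fixes the `h`-th roots of `a`: these are congruent to
integers modulo a prime above `p`, and distinct roots are not congruent to each other. -/
theorem stabilizer_eq_bot_of_pow_eq (hK : IsSplittingField ℚ K (X ^ h - C (a : ℚ))) {p : ℕ}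
    (hp : p ∈ primesOneMod h) (hpa : ¬ (p : ℤ) ∣ a) {y : ZMod p} (hy : y ^ h = a)
    {P : Ideal (𝓞 K)} [P.IsPrime] [P.LiesOver (Ideal.span {(p : ℤ)})] :
    MulAction.stabilizer Gal(K/ℚ) P = ⊥ := by
  have hdvd := dvd_sub_one_of_mem_primesOneMod hp
  have hp1 : 0 < p - 1 := Nat.sub_pos_of_lt hp.1.one_lt
  have hh : 0 < h := Nat.pos_of_dvd_of_pos hdvd hp1
  have hhP : (h : 𝓞 K) ∉ P := by
    rw [← Int.cast_natCast, intCast_mem_iff_dvd (p := p), Int.natCast_dvd_natCast]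
    exact Nat.not_dvd_of_pos_of_lt hh (by have := Nat.le_of_dvd hp1 hdvd; omega)
  have : CharP (𝓞 K ⧸ P) p := ⟨fun x => by
    rw [← map_natCast (Ideal.Quotient.mk P), Ideal.Quotient.eq_zero_iff_mem, ← Int.cast_natCast,
      intCast_mem_iff_dvd (p := p), Int.natCast_dvd_natCast]⟩
  refine (Subgroup.eq_bot_iff_forall _).mpr fun σ hσ =>
    algEquiv_eq_one_of_smul_eq hh.ne' hK fun b hb => ?_
  have hσb : (σ • b) ^ h = a := by
    rw [← smul_pow', hb]
    exact map_intCast (MulSemiringAction.toRingHom Gal(K/ℚ) (𝓞 K) σ) a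
  obtain ⟨r, hr⟩ := exists_intCast_eq_of_pow_eq (Q := 𝓞 K ⧸ P) hp hy
    (β := Ideal.Quotient.mk P b) (by rw [← map_pow, hb, map_intCast])
  have hbr : b - r ∈ P := Ideal.Quotient.eq.mp (by rw [← hr, map_intCast])
  exact eq_of_pow_eq_of_sub_mem hσb hb hhP (by rwa [intCast_mem_iff_dvd (p := p)])
    (smul_sub_self_mem_of_sub_intCast_mem hσ hbr)

theorem isGalois_of_isSplittingField (f : ℚ[X]) [IsSplittingField ℚ K f] : IsGalois ℚ K :=
  have := Normal.of_isSplittingField (E := K) f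
  ⟨⟩

theorem splitsCompletely_of_pow_eq (hK : IsSplittingField ℚ K (X ^ h - C (a : ℚ))) {p : ℕ}
    (hp : p ∈ primesOneMod h) (hpa : ¬ (p : ℤ) ∣ a) {y : ZMod p} (hy : y ^ h = a) :
    SplitsCompletely K p := by
  have := isGalois_of_isSplittingField (K := K) (X ^ h - C (a : ℚ))
  have hpI : Prime (p : ℤ) := Nat.prime_iff_prime_int.mp hp.1
  have : (Ideal.span {(p : ℤ)}).IsPrime := (Ideal.span_singleton_prime hpI.ne_zero).mpr hpI
  obtain ⟨P, _, _⟩ := (inferInstance : Nonempty ((Ideal.span {(p : ℤ)}).primesOver (𝓞 K)))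
  exact splitsCompletely_of_stabilizer_eq_bot (P := P) hp.1
    (stabilizer_eq_bot_of_pow_eq hK hp hpa hy)

end

end Kummer

section PureSplittingField

variable {M : Type*} [Field M]

theorem exists_isPrimitiveRoot_of_isSplittingField {k : Type*} [Field k] [Algebra k M] {h : ℕ}
    [NeZero (h : M)] {a : k} (ha : a ≠ 0) (hM : IsSplittingField k M (X ^ h - C a)) :
    ∃ ζ : M, IsPrimitiveRoot ζ h := by
  have hh : 0 < h := Nat.pos_of_ne_zero fun h0 => NeZero.ne (h : M) (by rw [h0, Nat.cast_zero])
  have hsplit := splits_X_pow_sub_one_of_X_pow_sub_C _ h ha hM.splits'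
  rw [Polynomial.map_sub, Polynomial.map_pow, map_X, Polynomial.map_one] at hsplit
  obtain ⟨ζ, hζ⟩ := (hsplit.of_dvd (X_pow_sub_C_ne_zero hh 1)
    (cyclotomic.dvd_X_pow_sub_one h M)).exists_eval_eq_zero
      (by rw [degree_cyclotomic]; exact_mod_cast (Nat.totient_pos.mpr hh).ne')
  exact ⟨ζ, isRoot_cyclotomic_iff.mp hζ⟩

theorem exists_pow_eq_of_isSplittingField {k : Type*} [Field k] [Algebra k M] {h : ℕ}
    (hh : h ≠ 0) {a : k} (hM : IsSplittingField k M (X ^ h - C a)) :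
    ∃ β : M, β ^ h = algebraMap k M a := by
  obtain ⟨β, hβ⟩ := hM.splits'.exists_eval_eq_zero
    (by rw [degree_map, degree_X_pow_sub_C (Nat.pos_of_ne_zero hh)]; exact_mod_cast hh)
  exact ⟨β, by simpa [sub_eq_zero] using hβ⟩

theorem algEquiv_mul_apply_eq_of_commute {k : Type*} [Field k] [Algebra k M] {σ τ : Gal(M/k)}
    (hcomm : Commute σ τ) {h : ℕ} [NeZero h] {ζ β : M} (hζ : IsPrimitiveRoot ζ h)
    (hτ : τ ζ = ζ⁻¹) (hβ : σ (β ^ h) = β ^ h) : σ (β * τ β) = β * τ β := by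
  rcases eq_or_ne β 0 with rfl | hβ0
  · simp
  obtain ⟨j, -, hj⟩ := hζ.eq_pow_of_pow_eq_one (ξ := σ β / β)
    (by rw [div_pow, ← map_pow, hβ, div_self (pow_ne_zero h hβ0)])
  have hσβ : σ β = ζ ^ j * β := by rw [hj, div_mul_cancel₀ _ hβ0]
  have hστ : σ (τ β) = τ (σ β) := DFunLike.congr_fun hcomm.eq β
  have hζ0 : ζ ≠ 0 := hζ.ne_zero (NeZero.ne h)
  rw [map_mul, hστ, hσβ, map_mul, map_pow, hτ, inv_pow]
  field_simp

variable [NumberField M] {h : ℕ} {a : ℤ}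

theorem isCyclotomicExtension_of_finrank_le [NeZero h] {ζ : M} (hζ : IsPrimitiveRoot ζ h)
    (hle : Module.finrank ℚ M ≤ h.totient) : IsCyclotomicExtension {h} ℚ M := by
  have hfinrank : Module.finrank ℚ (IntermediateField.adjoin ℚ {ζ}) = h.totient := by
    rw [IntermediateField.adjoin.finrank (IsIntegral.of_finite ℚ ζ),
      ← cyclotomic_eq_minpoly_rat hζ (NeZero.pos h), natDegree_cyclotomic]
  have htop : IntermediateField.adjoin ℚ {ζ} = ⊤ := IntermediateField.eq_of_le_of_finrank_le
    le_top (by rwa [IntermediateField.finrank_top', hfinrank])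
  have hcycl := hζ.intermediateField_adjoin_isCyclotomicExtension ℚ
  rw [htop] at hcycl
  exact IsCyclotomicExtension.equiv {h} ℚ _ IntermediateField.topEquiv

theorem exists_algEquiv_apply_eq_inv [IsGalois ℚ M] [NeZero h] {ζ : M}
    (hζ : IsPrimitiveRoot ζ h) : ∃ τ : Gal(M/ℚ), τ ζ = ζ⁻¹ := by
  refine minpoly.exists_algEquiv_of_root' (Algebra.IsAlgebraic.isAlgebraic ζ) ?_
  rw [← cyclotomic_eq_minpoly_rat hζ (NeZero.pos h),
    cyclotomic_eq_minpoly_rat hζ.inv (NeZero.pos h), minpoly.aeval]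

/-- If `β ^ h = a` and `τ` inverts the `h`-th roots of unity, then `β * τ β` is Galois invariant,
because the Galois group is abelian. -/
theorem exists_sq_eq_pow_of_finrank_le [NeZero h] (ha : a ≠ 0)
    (hM : IsSplittingField ℚ M (X ^ h - C (a : ℚ))) (hle : Module.finrank ℚ M ≤ h.totient) :
    ∃ r : ℤ, a ^ 2 = r ^ h := by
  have := isGalois_of_isSplittingField (K := M) (X ^ h - C (a : ℚ))
  have : NeZero (h : M) := NeZero.charZero
  obtain ⟨ζ, hζ⟩ := exists_isPrimitiveRoot_of_isSplittingField (Int.cast_ne_zero.mpr ha) hM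
  obtain ⟨β, hβ⟩ := exists_pow_eq_of_isSplittingField (NeZero.ne h) hM
  obtain ⟨τ, hτ⟩ := exists_algEquiv_apply_eq_inv hζ
  have := isCyclotomicExtension_of_finrank_le hζ hle
  have := IsCyclotomicExtension.isMulCommutative {h} ℚ M
  have hfix : ∀ σ : Gal(M/ℚ), σ (β * τ β) = β * τ β := fun σ =>
    algEquiv_mul_apply_eq_of_commute (mul_comm' σ τ) hζ hτ (by rw [hβ, AlgEquiv.commutes])
  obtain ⟨r, hr⟩ := IntermediateField.mem_bot.mp ((IsGalois.mem_bot_iff_fixed _).mpr hfix)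
  have hrh : r ^ h = (a : ℚ) ^ 2 := (algebraMap ℚ M).injective (by
    rw [map_pow, hr, mul_pow, ← map_pow, hβ, AlgEquiv.commutes, ← sq, map_pow])
  obtain ⟨s, rfl⟩ := IsIntegrallyClosed.exists_algebraMap_eq_of_isIntegral_pow (R := ℤ)
    (NeZero.pos h) (hrh ▸ (isIntegral_algebraMap (x := a)).pow 2)
  rw [eq_intCast] at hrh
  exact ⟨s, by exact_mod_cast hrh.symm⟩

theorem isSquare_of_finrank_eq_one (hM : IsSplittingField ℚ M (X ^ 2 - C (a : ℚ)))
    (hone : Module.finrank ℚ M = 1) : IsSquare a := by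
  obtain ⟨β, hβ⟩ := exists_pow_eq_of_isSplittingField two_ne_zero hM
  obtain ⟨r, rfl⟩ : ∃ r : ℚ, algebraMap ℚ M r = β :=
    Algebra.mem_bot.mp (Subalgebra.bot_eq_top_iff_finrank_eq_one.mpr hone ▸ Algebra.mem_top)
  have hr : r ^ 2 = (a : ℚ) := (algebraMap ℚ M).injective (by rw [map_pow, hβ])
  exact Rat.isSquare_intCast_iff.mp ⟨r, by rw [← hr, sq]⟩

end PureSplittingField

/-! ### Power residues -/

section PowerResidues

/-- The primes modulo which `a` is not an `h`-th power. -/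
def nonResiduePrimes (h : ℕ) (a : ℤ) : Set ℕ :=
  {p | p.Prime ∧ ¬ ∃ y : ZMod p, y ^ h = a}

theorem nonResiduePrimes_subset_of_dvd {h k : ℕ} (hhk : h ∣ k) (a : ℤ) :
    nonResiduePrimes h a ⊆ nonResiduePrimes k a := by
  obtain ⟨l, rfl⟩ := hhk
  exact fun p hp => ⟨hp.1, fun ⟨y, hy⟩ => hp.2 ⟨y ^ l, by rw [← pow_mul', hy]⟩⟩

variable {h : ℕ} {a : ℤ}

theorem finrank_le_totient_of_summable_nonResiduePrimes [NeZero h] (ha : a ≠ 0) {K : Type*}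
    [Field K] [NumberField K] (hK : IsSplittingField ℚ K (X ^ h - C (a : ℚ)))
    (hsum : Summable ((nonResiduePrimes h a).indicator fun p : ℕ => (p : ℝ)⁻¹)) :
    Module.finrank ℚ K ≤ h.totient := by
  have hfin : Summable ((a.natAbs.primeFactors : Set ℕ).indicator fun p : ℕ => (p : ℝ)⁻¹) :=
    summable_of_hasFiniteSupport ((Finset.finite_toSet _).subset Set.support_indicator_subset)
  have hsub : primesOneMod h \ {p | SplitsCompletely K p} ⊆
      nonResiduePrimes h a ∪ a.natAbs.primeFactors := fun p ⟨hp, hpK⟩ => by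
    by_cases hpa : (p : ℤ) ∣ a
    · exact Or.inr (Nat.mem_primeFactors.mpr
        ⟨hp.1, Int.natCast_dvd.mp hpa, Int.natAbs_ne_zero.mpr ha⟩)
    · exact Or.inl ⟨hp.1, fun ⟨y, hy⟩ => hpK (splitsCompletely_of_pow_eq hK hp hpa hy)⟩
  have hpos : ∀ (S : Set ℕ) (p : ℕ), 0 ≤ S.indicator (fun p : ℕ => (p : ℝ)⁻¹) p := fun S p =>
    Set.indicator_nonneg (fun _ _ => by positivity) p
  refine finrank_le_totient_of_summable K (Summable.of_nonneg_of_le (hpos _) (fun p => ?_)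
    (hsum.add hfin))
  refine (Set.indicator_le_indicator_of_subset hsub (fun _ => by positivity) p).trans ?_
  rw [← Set.indicator_union_add_inter_apply]
  exact le_add_of_nonneg_right (hpos _ p)

theorem not_summable_nonResiduePrimes [NeZero h] (ha : a ≠ 0) (hpow : ∀ r : ℤ, a ^ 2 ≠ r ^ h) :
    ¬ Summable ((nonResiduePrimes h a).indicator fun p : ℕ => (p : ℝ)⁻¹) := fun hsum => by
  have : NumberField (SplittingField (X ^ h - C (a : ℚ))) := { }
  obtain ⟨r, hr⟩ := exists_sq_eq_pow_of_finrank_le ha (IsSplittingField.splittingField _)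
    (finrank_le_totient_of_summable_nonResiduePrimes ha (IsSplittingField.splittingField _) hsum)
  exact hpow r hr

theorem not_summable_nonResiduePrimes_two (ha : ¬ IsSquare a) :
    ¬ Summable ((nonResiduePrimes 2 a).indicator fun p : ℕ => (p : ℝ)⁻¹) := fun hsum => by
  have : NumberField (SplittingField (X ^ 2 - C (a : ℚ))) := { }
  have ha0 : a ≠ 0 := fun h0 => ha (h0 ▸ IsSquare.zero)
  exact ha (isSquare_of_finrank_eq_one (IsSplittingField.splittingField _) (le_antisymm
    (finrank_le_totient_of_summable_nonResiduePrimes ha0 (IsSplittingField.splittingField _) hsum)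
    Module.finrank_pos))

theorem eq_of_pow_choose_two_dvd {n r : ℕ} (hn : 3 ≤ n) (hr : 1 < r)
    (hdvd : r ^ n.choose 2 ∣ n ^ n) : n = 3 ∧ r = 3 ∨ n = 4 ∧ r = 2 := by
  have hle : r ^ (n - 1) ≤ n ^ 2 := by
    refine le_of_pow_le_pow_left₀ (n := n) (by omega) (by positivity) ?_
    calc (r ^ (n - 1)) ^ n = (r ^ n.choose 2) ^ 2 := by
          rw [← pow_mul, ← pow_mul, Nat.choose_two_right, mul_comm,
            Nat.div_mul_cancel (Nat.even_mul_pred_self n).two_dvd]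
      _ ≤ (n ^ n) ^ 2 := Nat.pow_le_pow_left (Nat.le_of_dvd (by positivity) hdvd) 2
      _ = (n ^ 2) ^ n := pow_right_comm n n 2
  have hn6 : n ≤ 6 := by
    by_contra! hn7
    have hlt : ∀ m ≥ 6, (m + 1) ^ 2 < 2 ^ m := fun m hm => by
      induction m, hm using Nat.le_induction with
      | base => norm_num
      | succ k hk ih =>
        rw [pow_succ 2]
        nlinarith
    have := hlt (n - 1) (by omega)
    rw [Nat.sub_add_cancel (by omega)] at this
    exact (hle.trans_lt this).not_ge (Nat.pow_le_pow_left hr _)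
  have hr3 : r ≤ 3 := by
    by_contra! hr4
    have hle4 : 4 ^ (n - 1) ≤ n ^ 2 := (Nat.pow_le_pow_left hr4 (n - 1)).trans hle
    interval_cases n <;> omega
  interval_cases n <;> interval_cases r <;> revert hdvd <;> decide

theorem eq_of_sq_eq_pow_choose_two {n c r : ℕ} (hn : n ≠ 2) (hc : 1 < c) (hdvd : c ^ 2 ∣ n ^ n)
    (hr : c ^ 2 = r ^ n.choose 2) : n = 4 ∧ c = 8 := by
  have hc2 : 1 < c ^ 2 := Nat.one_lt_pow two_ne_zero hc
  have hn3 : 3 ≤ n := by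
    by_contra! hlt
    interval_cases n <;> simp_all
  have hr1 : 1 < r := by
    by_contra! hle
    exact (hc2.trans_le (hr.trans_le (pow_le_one₀ r.zero_le hle))).false
  obtain ⟨rfl, rfl⟩ | ⟨rfl, rfl⟩ := eq_of_pow_choose_two_dvd hn3 hr1 (hr ▸ hdvd)
  · rw [show Nat.choose 3 2 = 3 from rfl] at hr
    have : c ≤ 5 := by nlinarith
    interval_cases c <;> omega
  · exact ⟨rfl, Nat.pow_left_injective two_ne_zero hr⟩

theorem not_summable_nonResiduePrimes_choose_two {n : ℕ} (hn : n ≠ 2) {c : ℤ} (hc : 1 < |c|)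
    (hdvd : c ^ 2 ∣ (n : ℤ) ^ n) :
    ¬ Summable ((nonResiduePrimes (n.choose 2) c).indicator fun p : ℕ => (p : ℝ)⁻¹) := by
  have hc0 : c ≠ 0 := by
    rintro rfl
    simp at hc
  have hcn : 1 < c.natAbs := by
    rw [Int.abs_eq_natAbs] at hc
    exact_mod_cast hc
  have hdvdn : c.natAbs ^ 2 ∣ n ^ n := by
    simpa [Int.natAbs_pow] using Int.natAbs_dvd_natAbs.mpr hdvd
  have hn2 : 2 ≤ n := by
    by_contra! hlt
    interval_cases n <;> simp_all
  have : NeZero (n.choose 2) := ⟨(Nat.choose_pos hn2).ne'⟩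
  by_cases hpow : ∃ r : ℤ, c ^ 2 = r ^ n.choose 2
  · obtain ⟨r, hr⟩ := hpow
    obtain ⟨rfl, hc8⟩ := eq_of_sq_eq_pow_choose_two (r := r.natAbs) hn hcn hdvdn
      (by rw [← Int.natAbs_pow, hr, Int.natAbs_pow])
    refine fun hsum => not_summable_nonResiduePrimes_two (a := c) ?_
      (hsum.indicator (nonResiduePrimes 2 c) |>.congr fun p => ?_)
    · rintro ⟨s, rfl⟩
      rw [Int.natAbs_mul] at hc8
      have : s.natAbs ≤ 2 := by nlinarith
      interval_cases s.natAbs <;> omega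
    · rw [Set.indicator_indicator, Set.inter_eq_left.mpr
        (nonResiduePrimes_subset_of_dvd (by decide) c)]
  · exact not_summable_nonResiduePrimes hc0 (not_exists.mp hpow)

end PowerResidues

/-! ### The index of a pure order -/

section IndexDeterminant

-- Writing `g = g₀ + f` with `X ∣ f`, the matrix is the product of the lower triangular matrix of
-- the coefficients of the `f ^ k` and the unitriangular one of the coefficients of `(X + g₀) ^ j`.
theorem det_coeff_pow {R : Type*} [CommRing R] (g : R[X]) (n : ℕ) :
    (Matrix.of fun i j : Fin n => (g ^ (j : ℕ)).coeff i).det = g.coeff 1 ^ n.choose 2 := by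
  nontriviality R
  set f : R[X] := X * g.divX with hf
  have hcomp : ∀ j : ℕ, g ^ j = ((X + C (g.coeff 0)) ^ j).comp f := fun j => by
    rw [pow_comp, add_comp, X_comp, C_comp, hf, X_mul_divX_add]
  have hmul : (Matrix.of fun i j : Fin n => (g ^ (j : ℕ)).coeff i) =
      (Matrix.of fun i k : Fin n => (f ^ (k : ℕ)).coeff i) *
        (Matrix.of fun k j : Fin n => ((X + C (g.coeff 0)) ^ (j : ℕ)).coeff k) := by
    ext i j
    simp only [Matrix.mul_apply, Matrix.of_apply]
    rw [hcomp, comp, eval₂_eq_sum_range' (n := n) _ (by simp [natDegree_pow_X_add_C]),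
      finsetSum_coeff, Finset.sum_range]
    simp [mul_comm]
  have htri : (Matrix.of fun i k : Fin n => (f ^ (k : ℕ)).coeff i).IsLowerTriangular := by
    intro i k hik
    have hik' : (i : ℕ) < k := hik
    simp only [Matrix.of_apply, hf, mul_pow, coeff_X_pow_mul', if_neg hik'.not_ge]
  have hdiag : ∀ i : ℕ, (f ^ i).coeff i = g.coeff 1 ^ i := fun i => by
    rw [hf, mul_pow, coeff_X_pow_mul', if_pos le_rfl, Nat.sub_self, coeff_zero_eq_eval_zero,
      eval_pow, ← coeff_zero_eq_eval_zero, coeff_divX]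
  rw [hmul, Matrix.det_mul, Matrix.det_matrixOfPolynomials _ (fun i => natDegree_pow_X_add_C _ _)
    (fun i => (monic_X_add_C _).pow _), mul_one, Matrix.det_of_isLowerTriangular _ htri]
  simp only [Matrix.of_apply, hdiag]
  rw [Finset.prod_pow_eq_pow_sum, Fin.sum_univ_eq_sum_range (fun i => i), Finset.sum_range_id,
    Nat.choose_two_right]

variable {R S : Type*} [CommRing R] [CommRing S] [Algebra R S] {α θ : S} {n : ℕ}

theorem aeval_sub_sum_coeff_smul_pow_mem {I : Ideal S} (hα : α ^ n ∈ I) (f : R[X]) :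
    aeval α f - ∑ i : Fin n, f.coeff i • α ^ (i : ℕ) ∈ I := by
  rw [aeval_eq_sum_range' (n := n + (f.natDegree + 1)) (by omega), Finset.sum_range_add,
    ← Fin.sum_univ_eq_sum_range (fun i => f.coeff i • α ^ i), add_sub_cancel_left]
  refine I.sum_mem fun i _ => ?_
  rw [pow_add, Algebra.smul_def]
  exact I.mul_mem_left _ (I.mul_mem_right _ hα)

theorem toMatrix_pow_map_mul_coeff_pow_map {k : Type*} [CommRing k] (φ : R →+* k) {π : R}
    (hπ : φ π = 0) (b : Module.Basis (Fin n) R S) (hb : ∀ i, b i = θ ^ (i : ℕ))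
    (hα : α ^ n ∈ Ideal.span {algebraMap R S π}) {g : R[X]}
    (hg : θ - aeval α g ∈ Ideal.span {algebraMap R S π}) :
    (b.toMatrix fun j : Fin n => α ^ (j : ℕ)).map φ *
      (Matrix.of fun i j : Fin n => ((g.map φ) ^ (j : ℕ)).coeff i) = 1 := by
  ext l j
  have hpow : b j - ∑ i : Fin n, (g ^ (j : ℕ)).coeff i • α ^ (i : ℕ) ∈
      Ideal.span {algebraMap R S π} := by
    have h := Ideal.add_mem _ (Ideal.mem_of_dvd _ (sub_dvd_pow_sub_pow θ (aeval α g) j) hg)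
      (aeval_sub_sum_coeff_smul_pow_mem hα (g ^ (j : ℕ)))
    rwa [map_pow, sub_add_sub_cancel, ← hb] at h
  obtain ⟨w, hw⟩ := Ideal.mem_span_singleton.mp hpow
  rw [sub_eq_iff_eq_add, ← Algebra.smul_def] at hw
  have hrepr := congrArg (fun x => φ (b.repr x l)) hw
  simp only [b.repr_self, map_add, map_sum, map_smul, Finsupp.add_apply, Finsupp.finsetSum_apply,
    Finsupp.smul_apply, smul_eq_mul, map_mul, hπ, zero_mul, zero_add] at hrepr
  rw [Matrix.one_apply]
  simp only [Finsupp.single_apply, apply_ite φ, map_one, map_zero, eq_comm (a := j)] at hrepr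
  rw [hrepr, Matrix.mul_apply]
  refine Finset.sum_congr rfl fun i _ => ?_
  rw [mul_comm, Matrix.map_apply, Matrix.of_apply, ← Polynomial.map_pow, coeff_map,
    Module.Basis.toMatrix_apply]

theorem map_det_pow_mul_coeff_one_pow {k : Type*} [CommRing k] (φ : R →+* k) {π : R}
    (hπ : φ π = 0) (b : Module.Basis (Fin n) R S) (hb : ∀ i, b i = θ ^ (i : ℕ))
    (hα : α ^ n ∈ Ideal.span {algebraMap R S π}) {g : R[X]}
    (hg : θ - aeval α g ∈ Ideal.span {algebraMap R S π}) :
    φ (b.det fun j : Fin n => α ^ (j : ℕ)) * φ (g.coeff 1) ^ n.choose 2 = 1 := by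
  have hdet := congrArg Matrix.det (toMatrix_pow_map_mul_coeff_pow_map φ hπ b hb hα hg)
  rwa [Matrix.det_mul, Matrix.det_one, det_coeff_pow, coeff_map, ← RingHom.mapMatrix_apply,
    ← RingHom.map_det, ← Module.Basis.det_apply] at hdet

theorem adjoin_eq_top_of_isUnit_det_pow (b : Module.Basis (Fin n) R S)
    (hdet : IsUnit (b.det fun j : Fin n => α ^ (j : ℕ))) : Algebra.adjoin R {α} = ⊤ := by
  have hspan := ((Module.Basis.is_basis_iff_det b).mpr hdet).2
  rw [eq_top_iff, ← Subalgebra.toSubmodule.le_iff_le, Algebra.top_toSubmodule, ← hspan,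
    Submodule.span_le]
  rintro _ ⟨j, rfl⟩
  exact pow_mem (Algebra.self_mem_adjoin_singleton R α) _

theorem discr_eq_det_sq_mul {ι : Type*} [Fintype ι] [DecidableEq ι] (b : Module.Basis ι R S)
    (v : ι → S) : Algebra.discr R v = b.det v ^ 2 * Algebra.discr R b := by
  rw [Module.Basis.det_apply, ← Algebra.discr_of_matrix_vecMul]
  congr 1
  ext j
  rw [← b.sum_toMatrix_smul_self v j]
  simp only [Matrix.vecMul, dotProduct, Matrix.map_apply, Algebra.smul_def]
  exact Finset.sum_congr rfl fun i _ => mul_comm _ _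

theorem exists_basis_eq_pow [IsDomain R] [IsIntegrallyClosed R] [IsDomain S]
    [Module.IsTorsionFree R S] (hint : IsIntegral R θ) (hθ : Algebra.adjoin R {θ} = ⊤)
    (hrank : Module.finrank R S = n) :
    ∃ b : Module.Basis (Fin n) R S, ∀ i, b i = θ ^ (i : ℕ) := by
  set B := PowerBasis.ofAdjoinEqTop' hint hθ
  have hdim : B.dim = n := by rw [← B.finrank, hrank]
  refine ⟨B.basis.reindex (finCongr hdim), fun i => ?_⟩
  rw [Module.Basis.reindex_apply, B.basis_eq_pow, PowerBasis.ofAdjoinEqTop'_gen]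
  rfl

end IndexDeterminant

section PureExtension

variable {F L : Type*} [Field F] [Field L] [Algebra F L] {n : ℕ} {a : F} {x : L}

theorem minpoly_eq_X_pow_sub_C (hirr : Irreducible (X ^ n - C a)) (hx : x ^ n = algebraMap F L a) :
    minpoly F x = X ^ n - C a :=
  (minpoly.eq_of_irreducible_of_monic hirr (by simp [hx])
    (monic_X_pow_sub_C _ (ne_zero_of_irreducible_X_pow_sub_C hirr))).symm

variable [FiniteDimensional F L]

theorem finrank_eq_of_pow_eq (hirr : Irreducible (X ^ n - C a)) (hx : x ^ n = algebraMap F L a)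
    (htop : Algebra.adjoin F {x} = ⊤) : Module.finrank F L = n := by
  rw [(PowerBasis.ofAdjoinEqTop (IsIntegral.of_finite F x) htop).finrank,
    PowerBasis.ofAdjoinEqTop_dim, minpoly_eq_X_pow_sub_C hirr hx, natDegree_X_pow_sub_C]

theorem norm_pow_eq_of_pow_eq (hirr : Irreducible (X ^ n - C a)) (hx : x ^ n = algebraMap F L a)
    (htop : Algebra.adjoin F {x} = ⊤) : Algebra.norm F x ^ n = a ^ n := by
  rw [← map_pow, hx, Algebra.norm_algebraMap, finrank_eq_of_pow_eq hirr hx htop]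

end PureExtension

theorem abs_discr_pow {K : Type*} [Field K] [NumberField K] {n : ℕ} {a : ℚ} {x : K}
    (hirr : Irreducible (X ^ n - C a)) (hx : x ^ n = algebraMap ℚ K a)
    (htop : Algebra.adjoin ℚ {x} = ⊤) :
    |Algebra.discr ℚ fun j : Fin n => x ^ (j : ℕ)| = n ^ n * |a| ^ (n - 1) := by
  have hfin := finrank_eq_of_pow_eq hirr hx htop
  have hn := ne_zero_of_irreducible_X_pow_sub_C hirr
  set B : PowerBasis ℚ K := PowerBasis.ofAdjoinEqTop (IsIntegral.of_finite ℚ x) htop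
  have hgen : B.gen = x := rfl
  have hbasis : ∀ k, k = B.dim →
      Algebra.discr ℚ (fun j : Fin k => x ^ (j : ℕ)) = Algebra.discr ℚ B.basis := by
    rintro k rfl
    rw [B.coe_basis, hgen]
  have hnorm : |Algebra.norm ℚ x| = |a| := by
    rw [← pow_left_inj₀ (abs_nonneg _) (abs_nonneg _) hn, ← abs_pow, ← abs_pow,
      norm_pow_eq_of_pow_eq hirr hx htop]
  have hder : aeval x (derivative (X ^ n - C a)) = algebraMap ℚ K n * x ^ (n - 1) := by
    simp [derivative_X_pow]
  rw [hbasis n (by rw [← B.finrank, hfin]), Algebra.discr_powerBasis_eq_norm, hgen,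
    minpoly_eq_X_pow_sub_C hirr hx, hder, map_mul, Algebra.norm_algebraMap, hfin, map_pow]
  simp [abs_mul, hnorm]

theorem isEisensteinAt_X_pow_sub_C {R : Type*} [CommRing R] [IsDomain R] {π a : R} {n : ℕ}
    (hn : n ≠ 0) (hπ : Prime π) (hdvd : π ∣ a) (hsq : ¬ π ^ 2 ∣ a) :
    (X ^ n - C a : R[X]).IsEisensteinAt (Ideal.span {π}) := by
  refine (monic_X_pow_sub_C a hn).isEisensteinAt_of_mem_of_notMem
    ((Ideal.span_singleton_prime hπ.ne_zero).mpr hπ).ne_top (fun {i} hi => ?_) ?_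
  · rw [natDegree_X_pow_sub_C] at hi
    rw [Ideal.mem_span_singleton, coeff_sub, coeff_X_pow, if_neg hi.ne, coeff_C]
    split_ifs <;> simp [hdvd]
  · rwa [Ideal.span_singleton_pow, Ideal.mem_span_singleton, coeff_sub, coeff_X_pow,
      if_neg hn.symm, coeff_C_zero, zero_sub, dvd_neg]

section PureMonogenic

variable {K : Type*} [Field K] [NumberField K] {n : ℕ} {m : ℤ} {α : 𝓞 K}

theorem intCast_discr {ι : Type*} [Fintype ι] [DecidableEq ι] (v : ι → 𝓞 K) :
    (Algebra.discr ℤ v : ℚ) = Algebra.discr ℚ fun i => (v i : K) := by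
  rw [Algebra.discr_def, Algebra.discr_def, ← eq_intCast (Int.castRingHom ℚ), RingHom.map_det]
  congr 1
  ext i j
  simp only [RingHom.mapMatrix_apply, Matrix.map_apply, Algebra.traceMatrix_apply,
    Algebra.traceForm_apply, eq_intCast, Algebra.coe_trace_int, map_mul]

theorem minpoly_int_eq_X_pow_sub_C (hirr : Irreducible ((X : ℚ[X]) ^ n - C (m : ℚ)))
    (hα : (α : K) ^ n = m) : minpoly ℤ (α : K) = X ^ n - C m := by
  apply map_injective (algebraMap ℤ ℚ) Int.cast_injective
  rw [← minpoly.isIntegrallyClosed_eq_field_fractions' ℚ α.isIntegral_coe,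
    minpoly_eq_X_pow_sub_C hirr (hα.trans (map_intCast _ m).symm)]
  simp

theorem exists_not_dvd_and_smul_mem_adjoin {p : ℤ} (hp : Prime p)
    (heis : (minpoly ℤ (α : K)).IsEisensteinAt (Ideal.span {p}))
    (htop : Algebra.adjoin ℚ {(α : K)} = ⊤) (z : 𝓞 K) :
    ∃ e : ℤ, ¬ p ∣ e ∧ e • z ∈ Algebra.adjoin ℤ {α} := by
  set B : PowerBasis ℚ K := PowerBasis.ofAdjoinEqTop (IsIntegral.of_finite ℚ (α : K)) htop
  have hint : IsIntegral ℤ B.gen := α.isIntegral_coe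
  obtain ⟨d, hd⟩ := IsIntegrallyClosed.isIntegral_iff.mp
    (Algebra.discr_isIntegral ℚ (R := ℤ) (b := B.basis) fun i => by
      rw [B.basis_eq_pow]
      exact hint.pow _)
  have hd0 : d ≠ 0 := by
    rintro rfl
    exact Algebra.discr_not_zero_of_basis ℚ B.basis (by rw [← hd, map_zero])
  have hmem := Algebra.discr_mul_isIntegral_mem_adjoin ℚ hint z.isIntegral_coe
  obtain ⟨e, hde, hpe⟩ :=
    (FiniteMultiplicity.of_prime_left hp hd0).exists_eq_pow_mul_and_not_dvd
  rw [← hd, algebraMap_smul, hde, mul_smul] at hmem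
  have he := mem_adjoin_of_smul_prime_pow_smul_of_minpoly_isEisensteinAt hp hint
    (z.isIntegral_coe.smul e) hmem heis
  change e • (z : K) ∈ Algebra.adjoin ℤ {(α : K)} at he
  rw [Algebra.adjoin_singleton_eq_range_aeval] at he ⊢
  obtain ⟨g, hg⟩ := he
  refine ⟨e, hpe, g, FaithfulSMul.algebraMap_injective (𝓞 K) K ?_⟩
  rw [map_zsmul, ← hg]
  exact (aeval_algebraMap_apply K α g).symm

theorem exists_sub_aeval_mem_span {p : ℤ} (hp : Prime p)
    (heis : (minpoly ℤ (α : K)).IsEisensteinAt (Ideal.span {p}))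
    (htop : Algebra.adjoin ℚ {(α : K)} = ⊤) (z : 𝓞 K) :
    ∃ g : ℤ[X], z - aeval α g ∈ Ideal.span {algebraMap ℤ (𝓞 K) p} := by
  obtain ⟨e, hpe, he⟩ := exists_not_dvd_and_smul_mem_adjoin hp heis htop z
  rw [Algebra.adjoin_singleton_eq_range_aeval] at he
  obtain ⟨g, hg⟩ := he
  have hg' : aeval α g = e • z := hg
  obtain ⟨u, v, huv⟩ := (Prime.coprime_iff_not_dvd hp).mpr hpe
  have huv' : (u : 𝓞 K) * p + v * e = 1 := by exact_mod_cast congrArg (Int.cast (R := 𝓞 K)) huv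
  refine ⟨C v * g, Ideal.mem_span_singleton.mpr ⟨(u : 𝓞 K) * z, ?_⟩⟩
  rw [map_mul, hg', aeval_C, zsmul_eq_mul, eq_intCast, eq_intCast]
  linear_combination (-z) * huv'

variable (hsq : Squarefree m) (hirr : Irreducible ((X : ℚ[X]) ^ n - C (m : ℚ)))
  (hα : (α : K) ^ n = m) (htop : Algebra.adjoin ℚ {(α : K)} = ⊤) {θ : 𝓞 K}
  (b : Module.Basis (Fin n) ℤ (𝓞 K)) (hb : ∀ i, b i = θ ^ (i : ℕ))

include hsq hirr hα htop

include hb in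
theorem exists_intCast_det_pow_mul_pow_eq_one {p : ℕ} (hp : p.Prime) (hpm : (p : ℤ) ∣ m) :
    ∃ u : ZMod p, ((b.det fun j : Fin n => α ^ (j : ℕ) : ℤ) : ZMod p) * u ^ n.choose 2 = 1 := by
  have hpz : Prime (p : ℤ) := Nat.prime_iff_prime_int.mp hp
  have heis : (minpoly ℤ (α : K)).IsEisensteinAt (Ideal.span {(p : ℤ)}) := by
    rw [minpoly_int_eq_X_pow_sub_C hirr hα]
    exact isEisensteinAt_X_pow_sub_C (ne_zero_of_irreducible_X_pow_sub_C hirr) hpz hpm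
      fun h => hpz.not_isUnit (hsq _ (sq (p : ℤ) ▸ h))
  obtain ⟨g, hg⟩ := exists_sub_aeval_mem_span hpz heis htop θ
  refine ⟨_, map_det_pow_mul_coeff_one_pow (Int.castRingHom (ZMod p)) (by simp) b hb ?_ hg⟩
  have hαn : α ^ n = algebraMap ℤ (𝓞 K) m :=
    FaithfulSMul.algebraMap_injective (𝓞 K) K (by simp [hα])
  rw [hαn, Ideal.mem_span_singleton]
  exact map_dvd _ hpm

include hb in
theorem isCoprime_det_pow : IsCoprime (b.det fun j : Fin n => α ^ (j : ℕ)) m := by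
  refine Int.isCoprime_iff_gcd_eq_one.mpr (by_contra fun hgcd => ?_)
  obtain ⟨p, hp, hpd⟩ := Nat.exists_prime_and_dvd hgcd
  rw [← Int.natCast_dvd_natCast, Int.dvd_coe_gcd_iff] at hpd
  have : Fact p.Prime := ⟨hp⟩
  obtain ⟨u, hu⟩ := exists_intCast_det_pow_mul_pow_eq_one hsq hirr hα htop b hb hp hpd.2
  exact left_ne_zero_of_mul_eq_one hu ((ZMod.intCast_zmod_eq_zero_iff_dvd _ _).mpr hpd.1)

include hb in
theorem det_pow_sq_dvd : (b.det fun j : Fin n => α ^ (j : ℕ)) ^ 2 ∣ (n : ℤ) ^ n := by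
  have hdiscr : |Algebra.discr ℤ fun j : Fin n => α ^ (j : ℕ)| = (n : ℤ) ^ n * |m| ^ (n - 1) := by
    have h := abs_discr_pow hirr (hα.trans (map_intCast _ m).symm) htop
    rw [← Rat.intCast_inj, Int.cast_abs, intCast_discr]
    simpa using h
  have hcop : IsCoprime ((b.det fun j : Fin n => α ^ (j : ℕ)) ^ 2) (|m| ^ (n - 1)) := by
    refine IsCoprime.pow ?_
    obtain h | h := abs_choice m <;> rw [h]
    · exact isCoprime_det_pow hsq hirr hα htop b hb
    · exact (isCoprime_det_pow hsq hirr hα htop b hb).neg_right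
  refine hcop.dvd_of_dvd_mul_right ?_
  rw [← hdiscr, dvd_abs, discr_eq_det_sq_mul b]
  exact dvd_mul_right _ _

theorem exists_nonResiduePrimes_not_dvd_of_adjoin_eq_top (hθ : Algebra.adjoin ℤ {θ} = ⊤)
    (hne : Algebra.adjoin ℤ {α} ≠ ⊤) :
    ∃ c : ℤ, 1 < |c| ∧ c ^ 2 ∣ (n : ℤ) ^ n ∧
      ∀ p ∈ nonResiduePrimes (n.choose 2) c, ¬ (p : ℤ) ∣ m := by
  have hfin := finrank_eq_of_pow_eq hirr (hα.trans (map_intCast _ m).symm) htop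
  obtain ⟨b, hb⟩ := exists_basis_eq_pow (Algebra.IsIntegral.isIntegral θ) hθ
    ((RingOfIntegers.rank K).trans hfin)
  have hdvd := det_pow_sq_dvd hsq hirr hα htop b hb
  have hn : (n : ℤ) ≠ 0 := Nat.cast_ne_zero.mpr (ne_zero_of_irreducible_X_pow_sub_C hirr)
  have hc0 := ne_zero_pow two_ne_zero (ne_zero_of_dvd_ne_zero (pow_ne_zero n hn) hdvd)
  refine ⟨_, (Int.one_le_abs hc0).lt_of_ne' fun h1 => hne ?_, hdvd, fun p hp hpm => hp.2 ?_⟩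
  · exact adjoin_eq_top_of_isUnit_det_pow b (Int.isUnit_iff_abs_eq.mpr h1)
  · have : Fact p.Prime := ⟨hp.1⟩
    obtain ⟨u, hu⟩ := exists_intCast_det_pow_mul_pow_eq_one hsq hirr hα htop b hb hp.1 hpm
    exact ⟨u⁻¹, by rw [inv_pow, eq_inv_of_mul_eq_one_left hu]⟩

end PureMonogenic

theorem exists_numberField_pow_eq {n : ℕ} {m : ℤ}
    (hirr : Irreducible ((X : ℚ[X]) ^ n - C (m : ℚ))) :
    ∃ (K : Type) (_ : Field K) (_ : NumberField K) (α : 𝓞 K),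
      (α : K) ^ n = m ∧ Algebra.adjoin ℚ {(α : K)} = ⊤ := by
  have : Fact (Irreducible ((X : ℚ[X]) ^ n - C (m : ℚ))) := ⟨hirr⟩
  have hroot : AdjoinRoot.root ((X : ℚ[X]) ^ n - C (m : ℚ)) ^ n = m :=
    (root_X_pow_sub_C_pow n (m : ℚ)).trans (map_intCast _ m)
  have hint : IsIntegral ℤ (AdjoinRoot.root ((X : ℚ[X]) ^ n - C (m : ℚ))) :=
    IsIntegral.of_pow (Nat.pos_of_ne_zero (ne_zero_of_irreducible_X_pow_sub_C hirr))
      (hroot ▸ isIntegral_algebraMap (x := m))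
  exact ⟨AdjoinRoot ((X : ℚ[X]) ^ n - C (m : ℚ)), inferInstance, inferInstance, ⟨_, hint⟩, hroot,
    by convert! AdjoinRoot.adjoinRoot_eq_top (f := (X : ℚ[X]) ^ n - C (m : ℚ))⟩

theorem exists_nonResiduePrimes_not_dvd_of_memD {n : ℕ} {m : ℤ} (hm : MemD n m) :
    ∃ c : ℤ, 1 < |c| ∧ c ^ 2 ∣ (n : ℤ) ^ n ∧
      ∀ p ∈ nonResiduePrimes (n.choose 2) c, ¬ (p : ℤ) ∣ m := by
  obtain ⟨hsq, -, hirr, hK⟩ := hm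
  obtain ⟨K, _, _, α, hα, htop⟩ := exists_numberField_pow_eq hirr
  obtain ⟨⟨θ, hθ⟩, hne⟩ := hK K α hα htop
  exact exists_nonResiduePrimes_not_dvd_of_adjoin_eq_top hsq hirr hα htop hθ hne

theorem density_zero_monogenic_not_alpha_general (n : ℕ) (hn : n ≠ 2) :
    Tendsto (fun X : ℕ =>
        (((Finset.Icc (-(X : ℤ)) (X : ℤ)).filter (fun m => MemD n m)).card : ℝ) /
          (2 * X))
      atTop (nhds 0) := by
  change HasDensityZero {m | MemD n m}
  have hdensity : ∀ c ∈ (Finset.Icc (-(n : ℤ) ^ n) ((n : ℤ) ^ n)).filter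
      (fun c => 1 < |c| ∧ c ^ 2 ∣ (n : ℤ) ^ n),
      HasDensityZero {m | ∀ p ∈ nonResiduePrimes (n.choose 2) c, ¬ (p : ℤ) ∣ m} := fun c hc =>
    have ⟨hc1, hdvd⟩ := (Finset.mem_filter.mp hc).2
    hasDensityZero_of_not_dvd_of_not_summable (fun p hp => hp.1)
      (not_summable_nonResiduePrimes_choose_two hn hc1 hdvd)
  refine (HasDensityZero.biUnion _ hdensity).mono fun m hm => ?_
  obtain ⟨c, hc, hdvd, hres⟩ := exists_nonResiduePrimes_not_dvd_of_memD hm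
  have hn0 : n ≠ 0 := ne_zero_of_irreducible_X_pow_sub_C hm.2.2.1
  have hle : |c| ≤ (n : ℤ) ^ n := calc
    |c| ≤ |c| ^ 2 := le_self_pow₀ hc.le two_ne_zero
    _ = c ^ 2 := sq_abs c
    _ ≤ (n : ℤ) ^ n := Int.le_of_dvd (by positivity) hdvd
  exact Set.mem_biUnion (Finset.mem_filter.mpr ⟨Finset.mem_Icc.mpr (abs_le.mp hle), hc, hdvd⟩) hres

/-- **Density equality of monogenicity and `α`-monogenicity in the pure family.**
For `n ≥ 4`, the set of squarefree `m` with `X^n − m` irreducible for which `𝓞_m` is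
monogenic but `𝓞_m ≠ ℤ[α]` has two-sided natural density `0`. -/
theorem density_zero_monogenic_not_alpha (n : ℕ) (hn : 4 ≤ n) :
    Tendsto (fun X : ℕ =>
        (((Finset.Icc (-(X : ℤ)) (X : ℤ)).filter (fun m => MemD n m)).card : ℝ) /
          (2 * X))
      atTop (nhds 0) :=
  density_zero_monogenic_not_alpha_general n (by omega)
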